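/- Assume lim_{s→t0⁺} a_l(s) = α_l with α_l ≠ 0 for every l = 2, …, n, and that for every ρ > 0 there is L_ρ with |f_n(t, z1) − f_n(t, z2)| ≤ L_ρ |z1 − z2| for all t ∈ [t0,τ] and |z1|, |z2| ≤ ρ. Then for every ℓ ∈ (0, 1), every R > 0 and every θ > 0 there exists τ' ∈ (t0, min(t0 + θ, τ)] such that Ψ(t) is invertible for all t ∈ (t0, τ'] and sup_{t ∈ (t0, τ']} |Ψ(t)⁻¹ (Ξ(t; d1) − Ξ(t; d2))| ≤ ℓ · sup_{s ∈ [t0, τ']} |d1(s) − d2(s)| for all continuous d1, d2 : [t0, τ'] → ℝⁿ with sup norms at most R. -/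

import Mathlib

open MeasureTheory Matrix Set Filter Topology

noncomputable section

/-- `x` is a solution of `ẋ = A(t)x + g(t,x)` on `[t0, τ]` (integral form, componentwise). -/
def IsSolution (n : ℕ) (t0 τ : ℝ) (A : ℝ → Matrix (Fin n) (Fin n) ℝ)
    (g : ℝ → (Fin n → ℝ) → (Fin n → ℝ)) (x : ℝ → (Fin n → ℝ)) : Prop :=
  ContinuousOn x (Set.Icc t0 τ) ∧
    ∀ t ∈ Set.Icc t0 τ, ∀ i : Fin n,
      x t i = x t0 i + ∫ s in t0..t, ((A s).mulVec (x s) i + g s (x s) i)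

/-- `Φ` is the fundamental matrix of `ẋ = A(t)x` on `[t0, τ]`. -/
def IsFundamental (n : ℕ) (t0 τ : ℝ) (A : ℝ → Matrix (Fin n) (Fin n) ℝ)
    (Φ : ℝ → Matrix (Fin n) (Fin n) ℝ) : Prop :=
  (∀ i j : Fin n, ContinuousOn (fun t => Φ t i j) (Set.Icc t0 τ)) ∧
    ∀ t ∈ Set.Icc t0 τ, ∀ i j : Fin n,
      Φ t i j = (1 : Matrix (Fin n) (Fin n) ℝ) i j + ∫ s in t0..t, (A s * Φ s) i j

/-- `Ψ(t) = ∫_{t0}^t Φ(s)ᵀ C(s)ᵀ C(s) Φ(s) ds` (entrywise integral). -/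
def Psi (n k0 : ℕ) (t0 : ℝ) (C : ℝ → Matrix (Fin k0) (Fin n) ℝ)
    (Φ : ℝ → Matrix (Fin n) (Fin n) ℝ) (t : ℝ) : Matrix (Fin n) (Fin n) ℝ :=
  fun i j => ∫ s in t0..t, ((Φ s)ᵀ * (C s)ᵀ * C s * Φ s) i j

/-- `Ξ(t; z) = ∫_{t0}^t Φ(ρ)ᵀ C(ρ)ᵀ C(ρ) Φ(ρ) (∫_{t0}^ρ Φ(s)⁻¹ g(s, z(s)) ds) dρ`. -/
def Xi (n k0 : ℕ) (t0 : ℝ) (C : ℝ → Matrix (Fin k0) (Fin n) ℝ)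
    (Φ : ℝ → Matrix (Fin n) (Fin n) ℝ) (g : ℝ → (Fin n → ℝ) → (Fin n → ℝ))
    (z : ℝ → (Fin n → ℝ)) (t : ℝ) : Fin n → ℝ :=
  fun i => ∫ ρ in t0..t,
    ((Φ ρ)ᵀ * (C ρ)ᵀ * C ρ * Φ ρ).mulVec
      (fun i' => ∫ s in t0..ρ, ((Φ s)⁻¹).mulVec (g s (z s)) i') i

/-- The map `F_T(t; z)`. -/
def Fmap (n k0 : ℕ) (t0 : ℝ) (C : ℝ → Matrix (Fin k0) (Fin n) ℝ)
    (Φ : ℝ → Matrix (Fin n) (Fin n) ℝ) (g : ℝ → (Fin n → ℝ) → (Fin n → ℝ))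
    (y : ℝ → (Fin k0 → ℝ)) (T : ℝ) (z : ℝ → (Fin n → ℝ)) (t : ℝ) : Fin n → ℝ :=
  (Φ t).mulVec
      ((Psi n k0 t0 C Φ T)⁻¹.mulVec
        ((fun i => ∫ ρ in t0..T, ((Φ ρ)ᵀ * (C ρ)ᵀ).mulVec (y ρ) i)
          - Xi n k0 t0 C Φ g z T))
    + (Φ t).mulVec (fun i => ∫ ρ in t0..t, ((Φ ρ)⁻¹).mulVec (g ρ (z ρ)) i)

/-- supremum norm of `f` over `[a, b]`. -/
def supN (n : ℕ) (a b : ℝ) (f : ℝ → (Fin n → ℝ)) : ℝ :=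
  ⨆ t : Set.Icc a b, ‖f (t : ℝ)‖

/-- The triangular system matrix: `A(t)_{i,i+1} = a_{i+1}(t)` (1-based), zero elsewhere. -/
def triA (n : ℕ) (a : ℕ → ℝ → ℝ) (t : ℝ) : Matrix (Fin n) (Fin n) ℝ :=
  Matrix.of fun i j => if (j : ℕ) = (i : ℕ) + 1 then a ((i : ℕ) + 2) t else 0

/-- The output row vector `C = (1, 0, …, 0)`. -/
def triC (n : ℕ) : Matrix (Fin 1) (Fin n) ℝ :=
  Matrix.of fun _ j => if (j : ℕ) = 0 then 1 else 0

/-- The triangular vector field `g(t,x) = (f_1(t), …, f_{n-1}(t), f_n(t,x))ᵀ`. -/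
def triG (n : ℕ) (f : ℕ → ℝ → ℝ) (fn : ℝ → (Fin n → ℝ) → ℝ)
    (t : ℝ) (x : Fin n → ℝ) : Fin n → ℝ :=
  fun i => if (i : ℕ) = n - 1 then fn t x else f ((i : ℕ) + 1) t

/-- Regularity of the triangular data: `a_l`, `f_l` measurable and bounded on `[t0,τ]`,
`f_n` measurable in `t` and continuous in `x`. -/
def TriRegular (n : ℕ) (t0 τ : ℝ) (a f : ℕ → ℝ → ℝ)
    (fn : ℝ → (Fin n → ℝ) → ℝ) : Prop :=
  (∀ l, 2 ≤ l → l ≤ n → Measurable (a l)) ∧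
  (∀ l, 2 ≤ l → l ≤ n → ∃ M : ℝ, ∀ t ∈ Set.Icc t0 τ, |a l t| ≤ M) ∧
  (∀ l, 1 ≤ l → l ≤ n - 1 → Measurable (f l)) ∧
  (∀ l, 1 ≤ l → l ≤ n - 1 → ∃ M : ℝ, ∀ t ∈ Set.Icc t0 τ, |f l t| ≤ M) ∧
  (∀ v : Fin n → ℝ, Measurable fun t => fn t v) ∧
  (∀ t ∈ Set.Icc t0 τ, Continuous (fn t))


/-! ### Generic lemmas -/

lemma aux_integral_asymp (t0 τ : ℝ) (ht : t0 < τ) (h : ℝ → ℝ) (k : ℕ) (c : ℝ)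
    (hint : IntervalIntegrable h volume t0 τ)
    (hlim : Tendsto (fun s => h s / (s - t0) ^ k) (𝓝[>] t0) (𝓝 c)) :
    Tendsto (fun t => (∫ s in t0..t, h s) / (t - t0) ^ (k + 1)) (𝓝[>] t0)
      (𝓝 (c / (k + 1))) := by
  rw [Metric.tendsto_nhds] at hlim ⊢
  intro ε hε
  have h1 := hlim (ε / 2) (by positivity)
  have h2 := h1.and (Ioc_mem_nhdsGT ht)
  obtain ⟨u, hu, hsub⟩ := mem_nhdsGT_iff_exists_Ioc_subset.1 h2
  filter_upwards [Ioc_mem_nhdsGT hu] with t htu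
  have hδ : 0 < t - t0 := sub_pos.2 htu.1
  have htτ : t ≤ τ := (hsub htu).2.2
  have hI : ∫ s in t0..t, (s - t0) ^ k = (t - t0) ^ (k + 1) / (k + 1) := by
    rw [intervalIntegral.integral_comp_sub_right (fun s => s ^ k)]
    simp
  have hc : IntervalIntegrable (fun s => (s - t0) ^ k) volume t0 t := by
    apply Continuous.intervalIntegrable; fun_prop
  have hht : IntervalIntegrable h volume t0 t :=
    hint.mono_set (by
      rw [uIcc_of_le htu.1.le, uIcc_of_le ht.le]; exact Icc_subset_Icc_right htτ)
  have key : ‖∫ s in t0..t, (h s - c * (s - t0) ^ k)‖ ≤ ∫ s in t0..t, ε / 2 * (s - t0) ^ k := by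
    apply intervalIntegral.norm_integral_le_of_norm_le htu.1.le
    · refine Eventually.of_forall fun s hs => ?_
      have hs' := (hsub ⟨hs.1, hs.2.trans htu.2⟩).1
      have hp : 0 < (s - t0) ^ k := pow_pos (sub_pos.2 hs.1) k
      rw [Real.dist_eq] at hs'
      have : h s - c * (s - t0) ^ k = (h s / (s - t0) ^ k - c) * (s - t0) ^ k := by
        field_simp
      rw [Real.norm_eq_abs, this, abs_mul, abs_of_pos hp]
      exact mul_le_mul_of_nonneg_right hs'.le hp.le
    · exact hc.const_mul _
  rw [intervalIntegral.integral_sub hht (hc.const_mul _),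
    intervalIntegral.integral_const_mul, intervalIntegral.integral_const_mul, hI,
    Real.norm_eq_abs] at key
  have hP : 0 < (t - t0) ^ (k + 1) := pow_pos hδ _
  have hk : (0:ℝ) < k + 1 := by positivity
  rw [Real.dist_eq]
  have e : (∫ s in t0..t, h s) / (t - t0) ^ (k + 1) - c / (k + 1)
      = ((∫ s in t0..t, h s) - c * ((t - t0) ^ (k + 1) / (k + 1))) / (t - t0) ^ (k + 1) := by
    field_simp
  rw [e, abs_div, abs_of_pos hP, div_lt_iff₀ hP]
  refine key.trans_lt ?_
  have : (t - t0) ^ (k + 1) / ((k:ℝ) + 1) ≤ (t - t0) ^ (k + 1) :=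
    div_le_self hP.le (by linarith [(Nat.cast_nonneg k : (0:ℝ) ≤ k)])
  nlinarith

lemma aux_integral_diff (a b B : ℝ) (hab : a ≤ b) (f g : ℝ → ℝ) (hB : 0 ≤ B)
    (hm : AEStronglyMeasurable (fun s => f s - g s) (volume.restrict (Ioc a b)))
    (hb : ∀ s ∈ Ioc a b, |f s - g s| ≤ B) :
    |(∫ s in a..b, f s) - ∫ s in a..b, g s| ≤ B * (b - a) := by
  have hd : IntervalIntegrable (fun s => f s - g s) volume a b := by
    rw [intervalIntegrable_iff_integrableOn_Ioc_of_le hab]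
    refine IntegrableOn.of_bound (C := B) (by simp) hm ?_
    exact (ae_restrict_iff' measurableSet_Ioc).2 (Eventually.of_forall hb)
  have hnn : 0 ≤ B * (b - a) := mul_nonneg hB (sub_nonneg.2 hab)
  by_cases hf : IntervalIntegrable f volume a b
  · have hg : IntervalIntegrable g volume a b := by
      have := hf.sub hd
      simpa using this
    rw [← intervalIntegral.integral_sub hf hg]
    have := intervalIntegral.norm_integral_le_of_norm_le_const (a := a) (b := b) (C := B)
      (f := fun s => f s - g s) (by rw [uIoc_of_le hab]; exact hb)
    rwa [abs_of_nonneg (sub_nonneg.2 hab)] at this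
  · have hg : ¬ IntervalIntegrable g volume a b := by
      intro hg
      apply hf
      have := hg.add hd
      simpa using this
    rw [intervalIntegral.integral_undef hf, intervalIntegral.integral_undef hg]
    simpa using hnn

lemma aux_meas_primitive (a b : ℝ) (h : ℝ → ℝ)
    (hm : AEStronglyMeasurable h (volume.restrict (Ioc a b))) :
    AEStronglyMeasurable (fun ρ => ∫ s in a..ρ, h s) (volume.restrict (Ioc a b)) := by
  obtain ⟨h', hh', heq⟩ := hm
  have hS : MeasurableSet {p : ℝ × ℝ | a < p.2 ∧ p.2 ≤ p.1} :=
    (measurableSet_lt measurable_const measurable_snd).inter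
      (measurableSet_le measurable_snd measurable_fst)
  have hF : StronglyMeasurable (fun p : ℝ × ℝ =>
      {p : ℝ × ℝ | a < p.2 ∧ p.2 ≤ p.1}.indicator (fun p => h' p.2) p) :=
    (hh'.comp_measurable measurable_snd).indicator hS
  refine ⟨_, (hF.integral_prod_right' (ν := (volume : Measure ℝ))), ?_⟩
  refine (ae_restrict_iff' measurableSet_Ioc).2 (Eventually.of_forall fun ρ hρ => ?_)
  simp only
  rw [intervalIntegral.integral_of_le hρ.1.le]
  have h1 : ∫ s in Ioc a ρ, h s = ∫ s in Ioc a ρ, h' s := by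
    apply integral_congr_ae
    exact ae_mono (Measure.restrict_mono (Ioc_subset_Ioc_right hρ.2) le_rfl) heq
  rw [h1, ← integral_indicator measurableSet_Ioc]
  rfl

lemma aux_caratheodory {n : ℕ} (t0 τ T : ℝ) (hT : T ≤ τ) (h0 : t0 ≤ T)
    (fn : ℝ → (Fin n → ℝ) → ℝ)
    (h1 : ∀ v : Fin n → ℝ, Measurable fun t => fn t v)
    (h2 : ∀ t ∈ Set.Icc t0 τ, Continuous (fn t)) (d : ℝ → Fin n → ℝ)
    (hd : ContinuousOn d (Icc t0 T)) :
    AEStronglyMeasurable (fun s => fn s (d s)) (volume.restrict (Ioc t0 T)) := by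
  classical
  let u : (Fin n → ℝ) → ℝ → ℝ := fun v t => (Icc t0 τ).indicator (fun t => fn t v) t
  have hu : Measurable (Function.uncurry u) := by
    apply measurable_uncurry_of_continuous_of_measurable
    · intro t
      by_cases h : t ∈ Icc t0 τ
      · simpa [u, h] using h2 t h
      · simp only [u, indicator_of_notMem h]; exact continuous_const
    · intro v
      exact (h1 v).indicator measurableSet_Icc
  have hd' : Continuous (IccExtend h0 (fun s : Icc t0 T => d s)) :=
    (continuousOn_iff_continuous_domRestrict.1 hd).Icc_extend'
  have hm : Measurable (fun s => Function.uncurry u (IccExtend h0 (fun s : Icc t0 T => d s) s, s)) :=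
    hu.comp (hd'.measurable.prodMk measurable_id)
  refine ⟨_, hm.stronglyMeasurable, ?_⟩
  refine (ae_restrict_iff' measurableSet_Ioc).2 (Eventually.of_forall fun s hs => ?_)
  have hs1 : s ∈ Icc t0 T := ⟨hs.1.le, hs.2⟩
  have hs2 : s ∈ Icc t0 τ := ⟨hs.1.le, hs.2.trans hT⟩
  simp [u, Function.uncurry, hs2, IccExtend_of_mem h0 _ hs1]

lemma aux_hilbert_det {n : ℕ} (c : Fin n → ℝ) (hc : ∀ i, c i ≠ 0) :
    (Matrix.of fun i j : Fin n => c i * c j / (((i : ℕ) + (j : ℕ) : ℕ) + 1 : ℝ)).det ≠ 0 := by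
  intro hdet
  obtain ⟨y, hy0, hy⟩ := Matrix.exists_mulVec_eq_zero_iff.2 hdet
  apply hy0
  let p : Polynomial ℝ := ∑ i : Fin n, Polynomial.monomial (i : ℕ) (c i * y i)
  have hpe : ∀ r, p.eval r = ∑ i : Fin n, c i * y i * r ^ (i : ℕ) := by
    intro r; simp [p, Polynomial.eval_finsetSum]
  have hq : ∫ r in (0:ℝ)..1, (p.eval r) ^ 2 = 0 := by
    have e1 : ∀ r, (p.eval r) ^ 2
        = ∑ i : Fin n, ∑ j : Fin n, (c i * y i * (c j * y j)) * r ^ ((i : ℕ) + (j : ℕ)) := by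
      intro r
      rw [hpe, sq, Finset.sum_mul_sum]
      refine Finset.sum_congr rfl fun i _ => Finset.sum_congr rfl fun j _ => ?_
      rw [pow_add]; ring
    simp_rw [e1]
    rw [intervalIntegral.integral_finsetSum]
    swap
    · intro i _; apply Continuous.intervalIntegrable; fun_prop
    have e2 : ∀ i : Fin n, ∫ r in (0:ℝ)..1, ∑ j : Fin n,
        (c i * y i * (c j * y j)) * r ^ ((i : ℕ) + (j : ℕ)) = 0 := by
      intro i
      rw [intervalIntegral.integral_finsetSum]
      swap
      · intro j _; apply Continuous.intervalIntegrable; fun_prop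
      have := congrFun hy i
      simp only [Matrix.mulVec, dotProduct, Matrix.of_apply, Pi.zero_apply] at this
      have e3 : ∀ z : ℝ, y i * (∑ j : Fin n, c i * c j / (((i : ℕ) + (j : ℕ) : ℕ) + 1 : ℝ) * y j) = z
          → z = 0 := by
        intro z hz; rw [← hz, this, mul_zero]
      apply e3
      rw [Finset.mul_sum]
      refine Finset.sum_congr rfl fun j _ => ?_
      rw [intervalIntegral.integral_const_mul, integral_pow]
      simp
      ring
    simp [e2]
  have hz : ∀ r ∈ Ioc (0:ℝ) 1, p.eval r = 0 := by
    by_contra hcon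
    push Not at hcon
    obtain ⟨r, hr, hne⟩ := hcon
    have : 0 < ∫ r in (0:ℝ)..1, (p.eval r) ^ 2 := by
      apply intervalIntegral.integral_pos zero_lt_one
      · exact (p.continuous.pow 2).continuousOn
      · intro x _; positivity
      · exact ⟨r, ⟨hr.1.le, hr.2⟩, by positivity⟩
    linarith
  have hp0 : p = 0 := by
    apply Polynomial.eq_zero_of_infinite_isRoot
    exact (Set.Ioc_infinite (zero_lt_one (α := ℝ))).mono fun r hr => hz r hr
  funext i
  have hco : p.coeff (i : ℕ) = c i * y i := by
    simp only [p, Polynomial.finsetSum_coeff, Polynomial.coeff_monomial]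
    rw [Finset.sum_eq_single i]
    · simp
    · intro b _ hb; rw [if_neg]; intro h; exact hb (Fin.ext h)
    · simp
  rw [hp0] at hco
  simp only [Polynomial.coeff_zero] at hco
  simpa [hc i] using hco.symm

/-! ### Structure of the fundamental matrix -/

lemma triA_mul (n : ℕ) (a : ℕ → ℝ → ℝ) (s : ℝ) (M : Matrix (Fin n) (Fin n) ℝ) (i j : Fin n) :
    (triA n a s * M) i j
      = if h : (i : ℕ) + 1 < n then a ((i : ℕ) + 2) s * M ⟨(i : ℕ) + 1, h⟩ j else 0 := by
  rw [Matrix.mul_apply]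
  split_ifs with h
  · rw [Finset.sum_eq_single ⟨(i : ℕ) + 1, h⟩]
    · simp [triA]
    · intro b _ hb
      have : ¬ (b : ℕ) = (i : ℕ) + 1 := fun hh => hb (Fin.ext hh)
      simp [triA, this]
    · simp
  · apply Finset.sum_eq_zero
    intro b _
    have : ¬ (b : ℕ) = (i : ℕ) + 1 := by have := b.2; omega
    simp [triA, this]

lemma aux_Phi (n : ℕ) (t0 τ : ℝ) (ht : t0 < τ)
    (a : ℕ → ℝ → ℝ)
    (hm : ∀ l, 2 ≤ l → l ≤ n → Measurable (a l))
    (hb : ∀ l, 2 ≤ l → l ≤ n → ∃ M : ℝ, ∀ t ∈ Set.Icc t0 τ, |a l t| ≤ M)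
    (α : ℕ → ℝ)
    (hα : ∀ l, 2 ≤ l → l ≤ n →
      Filter.Tendsto (a l) (nhdsWithin t0 (Set.Ioi t0)) (nhds (α l)) ∧ α l ≠ 0)
    (Φ : ℝ → Matrix (Fin n) (Fin n) ℝ) (hΦ : IsFundamental n t0 τ (triA n a) Φ) :
    ∀ m : ℕ, ∀ i : Fin n, (i : ℕ) + m + 1 = n → ∀ j : Fin n,
      (j < i → ∀ t ∈ Icc t0 τ, Φ t i j = 0) ∧
      (j = i → ∀ t ∈ Icc t0 τ, Φ t i j = 1) ∧
      (i ≤ j → ∃ c : ℝ, c ≠ 0 ∧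
        Tendsto (fun t => Φ t i j / (t - t0) ^ ((j : ℕ) - (i : ℕ))) (𝓝[>] t0) (𝓝 c)) := by
  have hev : ∀ᶠ t in 𝓝[>] t0, t ∈ Icc t0 τ := by
    filter_upwards [Ioc_mem_nhdsGT ht] with t h using ⟨h.1.le, h.2⟩
  -- the diagonal limit is immediate
  have diag : ∀ i : Fin n, (∀ t ∈ Icc t0 τ, Φ t i i = 1) →
      ∃ c : ℝ, c ≠ 0 ∧
        Tendsto (fun t => Φ t i i / (t - t0) ^ ((i : ℕ) - (i : ℕ))) (𝓝[>] t0) (𝓝 c) := by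
    intro i h
    refine ⟨1, one_ne_zero, tendsto_const_nhds.congr' ?_⟩
    filter_upwards [hev] with t h'
    simp [h t h']
  intro m
  induction m with
  | zero =>
    intro i hi j
    have hrow : ∀ t ∈ Icc t0 τ, Φ t i j = (1 : Matrix (Fin n) (Fin n) ℝ) i j := by
      intro t h
      rw [hΦ.2 t h i j]
      simp only [triA_mul]
      have : ¬ (i : ℕ) + 1 < n := by omega
      simp [this]
    refine ⟨?_, ?_, ?_⟩
    · intro hji t h
      rw [hrow t h, Matrix.one_apply_ne hji.ne']
    · rintro rfl t h
      rw [hrow t h, Matrix.one_apply_eq]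
    · intro hij
      have : j = i := by
        apply Fin.ext
        have h1 : (i : ℕ) ≤ j := hij
        have := j.2
        omega
      subst this
      apply diag
      intro t h
      rw [hrow t h, Matrix.one_apply_eq]
  | succ m ih =>
    intro i hi j
    have hi1 : (i : ℕ) + 1 < n := by omega
    set i' : Fin n := ⟨(i : ℕ) + 1, hi1⟩ with hi'
    obtain ⟨ih1, ih2, ih3⟩ := ih i' (by simp [hi']; omega) j
    have hrow : ∀ t ∈ Icc t0 τ, Φ t i j = (1 : Matrix (Fin n) (Fin n) ℝ) i j
        + ∫ s in t0..t, a ((i : ℕ) + 2) s * Φ s i' j := by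
      intro t h
      rw [hΦ.2 t h i j]
      simp only [triA_mul, hi1, dite_true, hi']
    have hzero : j < i' → ∀ t ∈ Icc t0 τ, Φ t i j = (1 : Matrix (Fin n) (Fin n) ℝ) i j := by
      intro hj t h
      rw [hrow t h]
      have : ∫ s in t0..t, a ((i : ℕ) + 2) s * Φ s i' j = ∫ s in t0..t, (0:ℝ) := by
        apply intervalIntegral.integral_congr
        intro s hs
        rw [uIcc_of_le h.1] at hs
        simp [ih1 hj s ⟨hs.1, hs.2.trans h.2⟩]
      rw [this]; simp
    have hone : j = i → ∀ t ∈ Icc t0 τ, Φ t i j = 1 := by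
      rintro rfl t h
      rw [hzero (by simp [hi', Fin.lt_def]) t h, Matrix.one_apply_eq]
    refine ⟨?_, hone, ?_⟩
    · intro hji t h
      have : j < i' := by simp only [hi', Fin.lt_def] at hji ⊢; omega
      rw [hzero this t h, Matrix.one_apply_ne hji.ne']
    · intro hij
      rcases hij.eq_or_lt with heq | hlt
      · subst heq
        exact diag i (hone rfl)
      · have hi'j : i' ≤ j := by simp only [hi', Fin.le_def, Fin.lt_def] at hlt ⊢; omega
        obtain ⟨c, hc0, hc⟩ := ih3 hi'j
        have hl1 : 2 ≤ (i : ℕ) + 2 := by omega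
        have hl2 : (i : ℕ) + 2 ≤ n := by omega
        obtain ⟨ha, ha0⟩ := hα _ hl1 hl2
        obtain ⟨M, hM⟩ := hb _ hl1 hl2
        have hint : IntervalIntegrable (fun s => a ((i : ℕ) + 2) s * Φ s i' j) volume t0 τ := by
          apply IntervalIntegrable.mul_continuousOn
          · rw [intervalIntegrable_iff_integrableOn_Ioc_of_le ht.le]
            refine IntegrableOn.of_bound (C := M) (by simp)
              (hm _ hl1 hl2).aestronglyMeasurable ?_
            exact (ae_restrict_iff' measurableSet_Ioc).2
              (Eventually.of_forall fun s hs => hM s ⟨hs.1.le, hs.2⟩)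
          · rw [uIcc_of_le ht.le]; exact hΦ.1 i' j
        have hsub : (j : ℕ) - (i : ℕ) = ((j : ℕ) - (i' : ℕ)) + 1 := by
          simp only [hi', Fin.lt_def] at hlt ⊢; omega
        have := aux_integral_asymp t0 τ ht _ ((j : ℕ) - (i' : ℕ)) (α ((i : ℕ) + 2) * c) hint (by
          refine (ha.mul hc).congr fun s => ?_
          rw [mul_div_assoc])
        refine ⟨_, ?_, this.congr' ?_⟩
        · have : (0:ℝ) < (((j : ℕ) - (i' : ℕ) : ℕ) : ℝ) + 1 := by positivity
          exact div_ne_zero (mul_ne_zero ha0 hc0) this.ne'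
        · filter_upwards [hev] with t h
          rw [hrow t h, Matrix.one_apply_ne hlt.ne, zero_add, hsub]

open Asymptotics in
lemma aux_PhiInv (n : ℕ) (t0 : ℝ)
    (Φ : ℝ → Matrix (Fin n) (Fin n) ℝ)
    (hu : ∀ᶠ t in 𝓝[>] t0, IsUnit (Φ t))
    (h0 : ∀ i j : Fin n, j < i → ∀ᶠ t in 𝓝[>] t0, Φ t i j = 0)
    (h1 : ∀ i : Fin n, ∀ᶠ t in 𝓝[>] t0, Φ t i i = 1)
    (h2 : ∀ i j : Fin n, i ≤ j → (fun t => Φ t i j) =O[𝓝[>] t0]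
      (fun t => (t - t0) ^ ((j : ℕ) - (i : ℕ)))) (e : Fin n) (he : (e : ℕ) + 1 = n) :
    ∀ m : ℕ, ∀ i : Fin n, (i : ℕ) + m + 1 = n →
      (fun t => (Φ t)⁻¹ i e) =O[𝓝[>] t0] (fun t => (t - t0) ^ m) := by
  intro m
  induction m using Nat.strong_induction_on with
  | _ m ih =>
    intro i hi
    have hexp : (fun t => (Φ t)⁻¹ i e) =ᶠ[𝓝[>] t0] fun t =>
        (1 : Matrix (Fin n) (Fin n) ℝ) i e
          - ∑ j ∈ Finset.univ.filter (fun j => i < j), Φ t i j * (Φ t)⁻¹ j e := by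
      have h0' : ∀ᶠ t in 𝓝[>] t0, ∀ j : Fin n, j < i → Φ t i j = 0 := by
        rw [eventually_all]; intro j
        by_cases hj : j < i
        · filter_upwards [h0 i j hj] with t h _ using h
        · exact Eventually.of_forall fun t h => absurd h hj
      filter_upwards [hu, h0', h1 i] with t ht1 ht2 ht3
      have hmul : Φ t * (Φ t)⁻¹ = 1 :=
        Matrix.mul_nonsing_inv _ ((Matrix.isUnit_iff_isUnit_det _).1 ht1)
      have := congrFun (congrFun hmul i) e
      rw [Matrix.mul_apply, ← Finset.add_sum_erase _ _ (Finset.mem_univ i), ht3] at this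
      have hs : ∑ j ∈ Finset.univ.erase i, Φ t i j * (Φ t)⁻¹ j e
          = ∑ j ∈ Finset.univ.filter (fun j => i < j), Φ t i j * (Φ t)⁻¹ j e := by
        symm
        apply Finset.sum_subset
        · intro j hj
          simp only [Finset.mem_filter, Finset.mem_univ, true_and] at hj
          simp [hj.ne']
        · intro j hj hj2
          simp only [Finset.mem_filter, Finset.mem_univ, true_and, not_lt] at hj2
          rw [ht2 j (lt_of_le_of_ne hj2 (Finset.ne_of_mem_erase hj)), zero_mul]
      rw [hs] at this
      linarith
    refine (IsBigO.sub ?_ ?_).congr' hexp.symm (EventuallyEq.refl _ _)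
    · by_cases hie : i = e
      · have : m = 0 := by subst hie; omega
        subst this
        simpa using isBigO_const_const ((1 : Matrix (Fin n) (Fin n) ℝ) i e) (one_ne_zero (α := ℝ)) (𝓝[>] t0)
      · rw [Matrix.one_apply_ne hie]
        exact isBigO_zero _ _
    · apply IsBigO.fun_sum
      intro j hj
      simp only [Finset.mem_filter, Finset.mem_univ, true_and] at hj
      have hj' : (i : ℕ) < j := hj
      have hjn := j.2
      have := (h2 i j hj.le).mul (ih (n - 1 - j) (by omega) j (by omega))
      refine this.congr_right fun t => ?_
      rw [← pow_add]
      congr 1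
      omega

/-! ### The scaled Gramian -/

lemma aux_gram (n : ℕ) (t0 τ : ℝ) (ht : t0 < τ) (φ : Fin n → ℝ → ℝ) (c : Fin n → ℝ)
    (hc : ∀ i, c i ≠ 0) (hcont : ∀ i, ContinuousOn (φ i) (Icc t0 τ))
    (hlim : ∀ i, Tendsto (fun t => φ i t / (t - t0) ^ (i : ℕ)) (𝓝[>] t0) (𝓝 (c i)))
    (P : ℝ → Matrix (Fin n) (Fin n) ℝ)
    (hP : ∀ t i j, P t i j = ∫ s in t0..t, φ i s * φ j s) :
    ∃ B : ℝ, 0 ≤ B ∧ ∀ᶠ t in 𝓝[>] t0, IsUnit (P t) ∧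
      ∀ (ξ : Fin n → ℝ) (E : ℝ), 0 ≤ E → (∀ i, |ξ i| ≤ E * (t - t0) ^ ((i : ℕ) + 1)) →
        ∀ i, |((P t)⁻¹.mulVec ξ) i| * (t - t0) ^ (i : ℕ) ≤ B * E := by
  let G : ℝ → Matrix (Fin n) (Fin n) ℝ := fun t =>
    Matrix.of fun i j => P t i j / (t - t0) ^ ((i : ℕ) + (j : ℕ) + 1)
  let G0 : Matrix (Fin n) (Fin n) ℝ :=
    Matrix.of fun i j : Fin n => c i * c j / (((i : ℕ) + (j : ℕ) : ℕ) + 1 : ℝ)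
  have hG0 : G0.det ≠ 0 := aux_hilbert_det c hc
  have hG : Tendsto G (𝓝[>] t0) (𝓝 G0) := by
    refine tendsto_pi_nhds.2 fun i => tendsto_pi_nhds.2 fun j => ?_
    have := aux_integral_asymp t0 τ ht (fun s => φ i s * φ j s) ((i : ℕ) + (j : ℕ)) (c i * c j)
      (ContinuousOn.intervalIntegrable (by
        rw [uIcc_of_le ht.le]; exact (hcont i).mul (hcont j)))
      (((hlim i).mul (hlim j)).congr fun s => by rw [pow_add, div_mul_div_comm])
    refine this.congr fun t => ?_
    simp only [G, Matrix.of_apply, hP]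
  have hdet : ∀ᶠ t in 𝓝[>] t0, (G t).det ≠ 0 := by
    have : Tendsto (fun t => (G t).det) (𝓝[>] t0) (𝓝 G0.det) :=
      ((continuous_id.matrix_det).tendsto G0).comp hG
    exact this.eventually_ne hG0
  have hinv : Tendsto (fun t => (G t)⁻¹) (𝓝[>] t0) (𝓝 G0⁻¹) := by
    have : ContinuousAt (Inv.inv : Matrix (Fin n) (Fin n) ℝ → _) G0 := by
      apply continuousAt_matrix_inv
      exact NormedRing.inverse_continuousAt (Units.mk0 _ hG0)
    exact this.tendsto.comp hG
  have hentry : ∀ᶠ t in 𝓝[>] t0, ∀ i j, |(G t)⁻¹ i j| ≤ |G0⁻¹ i j| + 1 := by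
    rw [eventually_all]; intro i; rw [eventually_all]; intro j
    have : Tendsto (fun t => |(G t)⁻¹ i j|) (𝓝[>] t0) (𝓝 |G0⁻¹ i j|) :=
      ((tendsto_pi_nhds.1 (tendsto_pi_nhds.1 hinv i)) j).abs
    exact this.eventually_le_const (by linarith)
  let B : ℝ := ∑ i, ∑ j, (|G0⁻¹ i j| + 1)
  refine ⟨B, by positivity, ?_⟩
  filter_upwards [hdet, hentry, self_mem_nhdsWithin] with t h1 h2 h3
  have hδ : 0 < t - t0 := sub_pos.2 h3
  have hscale : ∀ x : Fin n → ℝ, (fun j : Fin n => (t - t0) ^ (j : ℕ) * x j)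
      = (G t)⁻¹.mulVec (fun i => (P t).mulVec x i / (t - t0) ^ ((i : ℕ) + 1)) := by
    intro x
    have e : (fun i : Fin n => (P t).mulVec x i / (t - t0) ^ ((i : ℕ) + 1))
        = (G t).mulVec (fun j => (t - t0) ^ (j : ℕ) * x j) := by
      funext i
      simp only [Matrix.mulVec, dotProduct, G, Matrix.of_apply]
      rw [Finset.sum_div]
      refine Finset.sum_congr rfl fun j _ => ?_
      have : (t - t0) ^ ((i : ℕ) + (j : ℕ) + 1)
        = (t - t0) ^ ((i : ℕ) + 1) * (t - t0) ^ (j : ℕ) := by rw [← pow_add]; congr 1; omega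
      rw [this]
      field_simp
    rw [e, Matrix.mulVec_mulVec, Matrix.nonsing_inv_mul _ (isUnit_iff_ne_zero.2 h1),
      Matrix.one_mulVec]
  have hU : IsUnit (P t).det := by
    rw [isUnit_iff_ne_zero]
    intro hd
    obtain ⟨x, hx0, hx⟩ := Matrix.exists_mulVec_eq_zero_iff.2 hd
    apply hx0
    have := hscale x
    rw [hx] at this
    have hz : (fun i : Fin n => (0 : Fin n → ℝ) i / (t - t0) ^ ((i : ℕ) + 1)) = 0 := by
      funext i; simp
    rw [hz, Matrix.mulVec_zero] at this
    funext j
    have hj := congrFun this j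
    simpa [hδ.ne'] using hj
  refine ⟨(Matrix.isUnit_iff_isUnit_det _).2 hU, ?_⟩
  intro ξ E hE hξ i
  have hs := congrFun (hscale ((P t)⁻¹.mulVec ξ)) i
  rw [Matrix.mulVec_mulVec, Matrix.mul_nonsing_inv _ hU, Matrix.one_mulVec] at hs
  have : |((P t)⁻¹.mulVec ξ) i| * (t - t0) ^ (i : ℕ)
      = |(t - t0) ^ (i : ℕ) * ((P t)⁻¹.mulVec ξ) i| := by
    rw [abs_mul, abs_of_pos (pow_pos hδ _), mul_comm]
  rw [this, hs]
  simp only [Matrix.mulVec, dotProduct]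
  calc |∑ j, (G t)⁻¹ i j * (ξ j / (t - t0) ^ ((j : ℕ) + 1))|
      ≤ ∑ j, |(G t)⁻¹ i j * (ξ j / (t - t0) ^ ((j : ℕ) + 1))| := Finset.abs_sum_le_sum_abs _ _
    _ ≤ ∑ j, (|G0⁻¹ i j| + 1) * E := by
        refine Finset.sum_le_sum fun j _ => ?_
        rw [abs_mul, abs_div, abs_of_pos (pow_pos hδ _)]
        have : |ξ j| / (t - t0) ^ ((j : ℕ) + 1) ≤ E := by
          rw [div_le_iff₀ (pow_pos hδ _)]; exact hξ j
        exact mul_le_mul (h2 i j) this (by positivity) (by positivity)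
    _ = (∑ j, (|G0⁻¹ i j| + 1)) * E := by rw [Finset.sum_mul]
    _ ≤ B * E := by
        refine mul_le_mul_of_nonneg_right ?_ hE
        exact Finset.single_le_sum (f := fun i => ∑ j, (|G0⁻¹ i j| + 1))
          (fun i _ => by positivity) (Finset.mem_univ i)

/-! ### The estimate for `Xi` -/

lemma triC_gram (n : ℕ) (z : Fin n) (hz : (z : ℕ) = 0) (M : Matrix (Fin n) (Fin n) ℝ)
    (i j : Fin n) : (Mᵀ * (triC n)ᵀ * triC n * M) i j = M z i * M z j := by
  have h : triC n * M = Matrix.of fun _ j => M z j := by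
    ext k j
    rw [Matrix.mul_apply, Finset.sum_eq_single z]
    · simp [triC, hz]
    · intro b _ hb
      have : ¬ (b : ℕ) = 0 := fun h => hb (Fin.ext (h.trans hz.symm))
      simp [triC, this]
    · simp
  rw [Matrix.mul_assoc, ← Matrix.transpose_mul, h, Matrix.mul_apply]
  simp

lemma aux_inv_cont (n : ℕ) (t0 τ : ℝ) (Φ : ℝ → Matrix (Fin n) (Fin n) ℝ)
    (hc : ∀ i j : Fin n, ContinuousOn (fun t => Φ t i j) (Set.Icc t0 τ))
    (hΦinv : ∀ t ∈ Set.Icc t0 τ, IsUnit (Φ t)) (i j : Fin n) :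
    ContinuousOn (fun t => (Φ t)⁻¹ i j) (Icc t0 τ) := by
  have h1 : ContinuousOn Φ (Icc t0 τ) :=
    continuousOn_pi.2 fun i => continuousOn_pi.2 fun j => hc i j
  have h2 : ContinuousOn (fun t => (Φ t)⁻¹) (Icc t0 τ) := by
    intro t ht
    have hd : (Φ t).det ≠ 0 :=
      isUnit_iff_ne_zero.1 ((Matrix.isUnit_iff_isUnit_det _).1 (hΦinv t ht))
    have : ContinuousAt (Inv.inv : Matrix (Fin n) (Fin n) ℝ → _) (Φ t) := by
      apply continuousAt_matrix_inv
      exact NormedRing.inverse_continuousAt (Units.mk0 _ hd)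
    exact this.comp_continuousWithinAt (h1 t ht)
  exact continuousOn_pi.1 (continuousOn_pi.1 h2 i) j

lemma aux_Xi (n : ℕ) (t0 τ T : ℝ) (hT0 : t0 < T) (hT : T ≤ τ)
    (a f : ℕ → ℝ → ℝ) (fn : ℝ → (Fin n → ℝ) → ℝ)
    (hreg : TriRegular n t0 τ a f fn)
    (Φ : ℝ → Matrix (Fin n) (Fin n) ℝ)
    (hc : ∀ i j : Fin n, ContinuousOn (fun t => Φ t i j) (Set.Icc t0 τ))
    (hΦinv : ∀ t ∈ Set.Icc t0 τ, IsUnit (Φ t))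
    (z e : Fin n) (hz : (z : ℕ) = 0) (he : (e : ℕ) + 1 = n)
    (K : ℝ) (hK : 0 ≤ K)
    (hK1 : ∀ t ∈ Ioc t0 T, ∀ j, |Φ t z j| ≤ K * (t - t0) ^ (j : ℕ))
    (hK2 : ∀ t ∈ Ioc t0 T, ∀ j, |(Φ t)⁻¹ j e| ≤ K * (t - t0) ^ (n - 1 - (j : ℕ)))
    (d1 d2 : ℝ → Fin n → ℝ)
    (hd1 : ContinuousOn d1 (Icc t0 T)) (hd2 : ContinuousOn d2 (Icc t0 T))
    (S : ℝ) (hS : 0 ≤ S)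
    (hfn : ∀ s ∈ Ioc t0 T, |fn s (d1 s) - fn s (d2 s)| ≤ S) (t : ℝ) (ht : t ∈ Ioc t0 T)
    (i : Fin n) :
    |(Xi n 1 t0 (fun _ => triC n) Φ (triG n f fn) d1 t
        - Xi n 1 t0 (fun _ => triC n) Φ (triG n f fn) d2 t) i|
      ≤ (n * K ^ 3 * S * (t - t0) ^ n) * (t - t0) ^ ((i : ℕ) + 1) := by
  have hsub : Ioc t0 T ⊆ Icc t0 τ := fun s hs => ⟨hs.1.le, hs.2.trans hT⟩
  have hsubt : Ioc t0 t ⊆ Ioc t0 T := Ioc_subset_Ioc_right ht.2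
  -- measurability of the inner integrand
  have hmeas : ∀ d : ℝ → Fin n → ℝ, ContinuousOn d (Icc t0 T) → ∀ j : Fin n,
      AEStronglyMeasurable (fun s => ((Φ s)⁻¹).mulVec (triG n f fn s (d s)) j)
        (volume.restrict (Ioc t0 T)) := by
    intro d hd j
    simp only [Matrix.mulVec, dotProduct]
    refine Finset.aestronglyMeasurable_fun_sum _ fun k _ => ?_
    refine AEStronglyMeasurable.mul ?_ ?_
    · exact ((aux_inv_cont n t0 τ Φ hc hΦinv j k).mono hsub).aestronglyMeasurable
        measurableSet_Ioc
    · by_cases hk : (k : ℕ) = n - 1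
      · simp only [triG, hk, if_true]
        exact aux_caratheodory t0 τ T hT hT0.le fn hreg.2.2.2.2.1 hreg.2.2.2.2.2 d hd
      · simp only [triG, hk, if_false]
        have := k.2
        exact (hreg.2.2.1 _ (by omega) (by omega)).aestronglyMeasurable
  have hprim : ∀ d : ℝ → Fin n → ℝ, ContinuousOn d (Icc t0 T) → ∀ j : Fin n,
      AEStronglyMeasurable (fun ρ => ∫ s in t0..ρ, ((Φ s)⁻¹).mulVec (triG n f fn s (d s)) j)
        (volume.restrict (Ioc t0 T)) :=
    fun d hd j => aux_meas_primitive t0 T _ (hmeas d hd j)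
  have hout : ∀ d : ℝ → Fin n → ℝ, ContinuousOn d (Icc t0 T) →
      AEStronglyMeasurable (fun ρ => ((Φ ρ)ᵀ * (triC n)ᵀ * triC n * Φ ρ).mulVec
        (fun i' => ∫ s in t0..ρ, ((Φ s)⁻¹).mulVec (triG n f fn s (d s)) i') i)
        (volume.restrict (Ioc t0 T)) := by
    intro d hd
    simp only [Matrix.mulVec, dotProduct, triC_gram n z hz]
    refine Finset.aestronglyMeasurable_fun_sum _ fun k _ => ?_
    refine AEStronglyMeasurable.mul ?_ ?_
    · exact (((hc z i).mul (hc z k)).mono hsub).aestronglyMeasurable measurableSet_Ioc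
    · exact hprim d hd k
  -- inner estimate
  have hin : ∀ ρ ∈ Ioc t0 T, ∀ j : Fin n,
      |(∫ s in t0..ρ, ((Φ s)⁻¹).mulVec (triG n f fn s (d1 s)) j)
        - ∫ s in t0..ρ, ((Φ s)⁻¹).mulVec (triG n f fn s (d2 s)) j|
      ≤ K * (ρ - t0) ^ (n - 1 - (j : ℕ)) * S * (ρ - t0) := by
    intro ρ hρ j
    have hr : 0 ≤ ρ - t0 := sub_nonneg.2 hρ.1.le
    apply aux_integral_diff t0 ρ _ hρ.1.le _ _ (by positivity)
    · exact ((hmeas d1 hd1 j).sub (hmeas d2 hd2 j)).mono_measure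
        (Measure.restrict_mono (Ioc_subset_Ioc_right hρ.2) le_rfl)
    · intro s hs
      have hsT : s ∈ Ioc t0 T := ⟨hs.1, hs.2.trans hρ.2⟩
      have e1 : ((Φ s)⁻¹).mulVec (triG n f fn s (d1 s)) j
          - ((Φ s)⁻¹).mulVec (triG n f fn s (d2 s)) j
          = (Φ s)⁻¹ j e * (fn s (d1 s) - fn s (d2 s)) := by
        simp only [Matrix.mulVec, dotProduct]
        rw [← Finset.sum_sub_distrib, Finset.sum_eq_single e]
        · have : (e : ℕ) = n - 1 := by omega
          simp only [triG, this, if_true]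
          ring
        · intro b _ hb
          have : ¬ (b : ℕ) = n - 1 := fun h => hb (Fin.ext (by omega))
          simp only [triG, this, if_false]
          ring
        · simp
      rw [e1, abs_mul]
      refine mul_le_mul ((hK2 s hsT j).trans ?_) (hfn s hsT) (abs_nonneg _) (by positivity)
      refine mul_le_mul_of_nonneg_left ?_ hK
      exact pow_le_pow_left₀ (sub_nonneg.2 hs.1.le) (by linarith [hs.2]) _
  have hδ : 0 ≤ t - t0 := sub_nonneg.2 ht.1.le
  have hfinal := aux_integral_diff t0 t (n * K ^ 3 * S * (t - t0) ^ ((i : ℕ) + n)) ht.1.le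
    _ _ (by positivity) (((hout d1 hd1).sub (hout d2 hd2)).mono_measure
        (Measure.restrict_mono hsubt le_rfl)) (by
    intro ρ hρ
    have hρT := hsubt hρ
    have hr : 0 ≤ ρ - t0 := sub_nonneg.2 hρ.1.le
    simp only [Matrix.mulVec, dotProduct, triC_gram n z hz]
    rw [← Finset.sum_sub_distrib]
    calc _ ≤ ∑ j : Fin n, K ^ 3 * S * (ρ - t0) ^ ((i : ℕ) + n) := by
          refine (Finset.abs_sum_le_sum_abs _ _).trans (Finset.sum_le_sum fun j _ => ?_)
          rw [← mul_sub, abs_mul, abs_mul]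
          have h3 := hin ρ hρT j
          simp only [Matrix.mulVec, dotProduct] at h3
          have hp : (ρ - t0) ^ ((i : ℕ) + n)
              = (ρ - t0) ^ (i : ℕ) * (ρ - t0) ^ (j : ℕ) * (ρ - t0) ^ (n - 1 - (j : ℕ))
                * (ρ - t0) := by
            rw [← pow_add, ← pow_add, ← pow_succ]; congr 1; have := j.2; omega
          calc _ ≤ (K * (ρ - t0) ^ (i : ℕ)) * (K * (ρ - t0) ^ (j : ℕ))
                * (K * (ρ - t0) ^ (n - 1 - (j : ℕ)) * S * (ρ - t0)) := by
                refine mul_le_mul (mul_le_mul (hK1 ρ hρT i) (hK1 ρ hρT j) (abs_nonneg _)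
                  (by positivity)) h3 (abs_nonneg _) (by positivity)
            _ = _ := by rw [hp]; ring
      _ = n * K ^ 3 * S * (ρ - t0) ^ ((i : ℕ) + n) := by
          rw [Finset.sum_const, Finset.card_univ, Fintype.card_fin, nsmul_eq_mul]; ring
      _ ≤ _ := by
          refine mul_le_mul_of_nonneg_left ?_ (by positivity)
          exact pow_le_pow_left₀ hr (by linarith [hρ.2]) _)
  simp only [Pi.sub_apply, Xi]
  refine hfinal.trans (le_of_eq ?_)
  rw [pow_add, pow_succ]; ring

lemma supN_le {n : ℕ} (t0 T : ℝ) (d : ℝ → Fin n → ℝ) (hd : ContinuousOn d (Icc t0 T))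
    (s : ℝ) (hs : s ∈ Icc t0 T) : ‖d s‖ ≤ supN n t0 T d := by
  have hb : BddAbove (range fun t : Icc t0 T => ‖d (t : ℝ)‖) := by
    have := (isCompact_Icc.image_of_continuousOn hd.norm).bddAbove
    refine this.mono ?_
    rintro _ ⟨t, rfl⟩
    exact ⟨t, t.2, rfl⟩
  exact le_ciSup hb ⟨s, hs⟩

theorem stmt16 (n : ℕ) (hn : 2 ≤ n) (t0 τ : ℝ) (ht : t0 < τ)
    (a f : ℕ → ℝ → ℝ) (fn : ℝ → (Fin n → ℝ) → ℝ)
    (hreg : TriRegular n t0 τ a f fn)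
    (α : ℕ → ℝ)
    (hα : ∀ l, 2 ≤ l → l ≤ n →
      Filter.Tendsto (a l) (nhdsWithin t0 (Set.Ioi t0)) (nhds (α l)) ∧ α l ≠ 0)
    (hfnLip : ∀ ρ > (0:ℝ), ∃ L : ℝ, ∀ t ∈ Set.Icc t0 τ, ∀ z1 z2 : Fin n → ℝ,
      ‖z1‖ ≤ ρ → ‖z2‖ ≤ ρ → |fn t z1 - fn t z2| ≤ L * ‖z1 - z2‖)
    (Φ : ℝ → Matrix (Fin n) (Fin n) ℝ) (hΦ : IsFundamental n t0 τ (triA n a) Φ)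
    (hΦinv : ∀ t ∈ Set.Icc t0 τ, IsUnit (Φ t)) :
    ∀ ℓ ∈ Set.Ioo (0:ℝ) 1, ∀ R > (0:ℝ), ∀ θ > (0:ℝ),
      ∃ τ' ∈ Set.Ioc t0 (min (t0 + θ) τ),
        (∀ t ∈ Set.Ioc t0 τ', IsUnit (Psi n 1 t0 (fun _ => triC n) Φ t)) ∧
        ∀ d1 d2 : ℝ → (Fin n → ℝ),
          ContinuousOn d1 (Set.Icc t0 τ') → ContinuousOn d2 (Set.Icc t0 τ') →
          supN n t0 τ' d1 ≤ R → supN n t0 τ' d2 ≤ R →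
          (⨆ t : Set.Ioc t0 τ',
            ‖(Psi n 1 t0 (fun _ => triC n) Φ (t : ℝ))⁻¹.mulVec
              (Xi n 1 t0 (fun _ => triC n) Φ (triG n f fn) d1 (t : ℝ)
                - Xi n 1 t0 (fun _ => triC n) Φ (triG n f fn) d2 (t : ℝ))‖)
            ≤ ℓ * supN n t0 τ' (fun s => d1 s - d2 s) := by
  intro ℓ hℓ R hR θ hθ
  obtain ⟨hΦc, hΦe⟩ := id hΦ
  let z : Fin n := ⟨0, by omega⟩
  let e : Fin n := ⟨n - 1, by omega⟩
  have hz : (z : ℕ) = 0 := rfl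
  have he : (e : ℕ) + 1 = n := by simp only [e]; omega
  have hev : ∀ᶠ t in 𝓝[>] t0, t ∈ Icc t0 τ := by
    filter_upwards [Ioc_mem_nhdsGT ht] with t h using ⟨h.1.le, h.2⟩
  have hS := aux_Phi n t0 τ ht a hreg.1 hreg.2.1 α hα Φ hΦ
  have hS' : ∀ i j : Fin n, _ := fun i j => hS (n - 1 - i) i (by have := i.2; omega) j
  have hBigO : ∀ i j : Fin n, i ≤ j → (fun t => Φ t i j) =O[𝓝[>] t0]
      (fun t => (t - t0) ^ ((j : ℕ) - (i : ℕ))) := by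
    intro i j hij
    obtain ⟨c, _, hc⟩ := (hS' i j).2.2 hij
    refine Asymptotics.isBigO_of_div_tendsto_nhds ?_ c hc
    filter_upwards [self_mem_nhdsWithin] with t h h'
    exact absurd h' (pow_pos (sub_pos.2 h) _).ne'
  have hInv := aux_PhiInv n t0 Φ (hev.mono fun t h => hΦinv t h)
    (fun i j hij => hev.mono fun t h => (hS' i j).1 hij t h)
    (fun i => hev.mono fun t h => (hS' i i).2.1 rfl t h) hBigO e he
  have hzj : ∀ j : Fin n, z ≤ j := fun j => Nat.zero_le _
  -- uniform constants
  have hb1 : ∀ j : Fin n, ∃ K : ℝ, ∀ᶠ t in 𝓝[>] t0, |Φ t z j| ≤ K * (t - t0) ^ (j : ℕ) := by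
    intro j
    obtain ⟨K, hK⟩ := (hBigO z j (hzj j)).bound
    refine ⟨K, ?_⟩
    filter_upwards [hK, self_mem_nhdsWithin] with t h1 h2
    have h3 : 0 < t - t0 := sub_pos.2 h2
    simpa [hz, abs_of_pos h3] using h1
  have hb2 : ∀ j : Fin n, ∃ K : ℝ, ∀ᶠ t in 𝓝[>] t0,
      |(Φ t)⁻¹ j e| ≤ K * (t - t0) ^ (n - 1 - (j : ℕ)) := by
    intro j
    obtain ⟨K, hK⟩ := (hInv (n - 1 - j) j (by have := j.2; omega)).bound
    refine ⟨K, ?_⟩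
    filter_upwards [hK, self_mem_nhdsWithin] with t h1 h2
    have h3 : 0 < t - t0 := sub_pos.2 h2
    simpa [abs_of_pos h3] using h1
  choose K1 hK1 using hb1
  choose K2 hK2 using hb2
  let K : ℝ := ∑ j, (|K1 j| + |K2 j|)
  have hK0 : 0 ≤ K := by positivity
  have hKj : ∀ j, |K1 j| + |K2 j| ≤ K := fun j =>
    Finset.single_le_sum (f := fun j => |K1 j| + |K2 j|) (fun i _ => by positivity)
      (Finset.mem_univ j)
  have hKle1 : ∀ j, K1 j ≤ K := fun j => by
    linarith [hKj j, le_abs_self (K1 j), abs_nonneg (K2 j)]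
  have hKle2 : ∀ j, K2 j ≤ K := fun j => by
    linarith [hKj j, le_abs_self (K2 j), abs_nonneg (K1 j)]
  -- the Gramian
  have hlim : ∀ j : Fin n, ∃ c : ℝ, c ≠ 0 ∧
      Tendsto (fun t => Φ t z j / (t - t0) ^ (j : ℕ)) (𝓝[>] t0) (𝓝 c) := by
    intro j
    simpa [hz] using (hS' z j).2.2 (hzj j)
  choose c hc0 hc using hlim
  obtain ⟨B, hB0, hB⟩ := aux_gram n t0 τ ht (fun j t => Φ t z j) c hc0 (fun j => hΦc z j) hc
    (Psi n 1 t0 (fun _ => triC n) Φ) (by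
      intro t i j
      simp only [Psi, triC_gram n z hz])
  obtain ⟨L, hL⟩ := hfnLip R hR
  let Q : ℝ := B * (n * K ^ 3 * |L|)
  have hQ : 0 ≤ Q := by positivity
  have hall : ∀ᶠ t in 𝓝[>] t0,
      (IsUnit (Psi n 1 t0 (fun _ => triC n) Φ t) ∧
      ∀ (ξ : Fin n → ℝ) (E : ℝ), 0 ≤ E → (∀ i, |ξ i| ≤ E * (t - t0) ^ ((i : ℕ) + 1)) →
        ∀ i, |((Psi n 1 t0 (fun _ => triC n) Φ t)⁻¹.mulVec ξ) i| * (t - t0) ^ (i : ℕ) ≤ B * E) ∧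
      (∀ j, |Φ t z j| ≤ K1 j * (t - t0) ^ (j : ℕ)) ∧
      (∀ j, |(Φ t)⁻¹ j e| ≤ K2 j * (t - t0) ^ (n - 1 - (j : ℕ))) :=
    hB.and ((eventually_all.2 hK1).and (eventually_all.2 hK2))
  obtain ⟨u, hu, husub⟩ := mem_nhdsGT_iff_exists_Ioc_subset.1 hall
  have hu : t0 < u := hu
  obtain ⟨hℓ0, hℓ1⟩ := hℓ
  let T : ℝ := min u (min (min (t0 + θ) τ) (min (t0 + 1) (t0 + ℓ / (Q + 1))))
  have hT0 : t0 < T := by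
    have : 0 < ℓ / (Q + 1) := by positivity
    simp only [T, lt_min_iff]
    refine ⟨hu, ⟨by linarith, ht⟩, by linarith, by linarith⟩
  have hTu : T ≤ u := min_le_left _ _
  have hTm : T ≤ min (t0 + θ) τ := (min_le_right _ _).trans (min_le_left _ _)
  have hTτ : T ≤ τ := hTm.trans (min_le_right _ _)
  have hT1 : T ≤ t0 + 1 := (min_le_right _ _).trans ((min_le_right _ _).trans (min_le_left _ _))
  have hTℓ : T ≤ t0 + ℓ / (Q + 1) :=
    (min_le_right _ _).trans ((min_le_right _ _).trans (min_le_right _ _))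
  have hfacts := fun t (h : t ∈ Ioc t0 T) => husub ⟨h.1, h.2.trans hTu⟩
  refine ⟨T, ⟨hT0, hTm⟩, fun t h => (hfacts t h).1.1, ?_⟩
  intro d1 d2 hd1 hd2 hR1 hR2
  set D := supN n t0 T (fun s => d1 s - d2 s) with hD
  have hDs : ∀ s ∈ Icc t0 T, ‖d1 s - d2 s‖ ≤ D := fun s hs =>
    supN_le t0 T (fun s => d1 s - d2 s) (hd1.sub hd2) s hs
  have hD0 : 0 ≤ D := (norm_nonneg _).trans (hDs t0 ⟨le_rfl, hT0.le⟩)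
  have hfn : ∀ s ∈ Ioc t0 T, |fn s (d1 s) - fn s (d2 s)| ≤ |L| * D := by
    intro s hs
    have hs' : s ∈ Icc t0 T := ⟨hs.1.le, hs.2⟩
    refine (hL s ⟨hs.1.le, hs.2.trans hTτ⟩ _ _ ((supN_le t0 T d1 hd1 s hs').trans hR1)
      ((supN_le t0 T d2 hd2 s hs').trans hR2)).trans ?_
    exact mul_le_mul (le_abs_self L) (hDs s hs') (norm_nonneg _) (abs_nonneg _)
  refine Real.iSup_le ?_ (by positivity)
  rintro ⟨t, htT⟩
  have hδ : 0 < t - t0 := sub_pos.2 htT.1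
  rw [pi_norm_le_iff_of_nonneg (by positivity)]
  intro i
  rw [Real.norm_eq_abs]
  have hX := aux_Xi n t0 τ T hT0 hTτ a f fn hreg Φ hΦc hΦinv z e hz he K hK0
    (fun s hs j => ((hfacts s hs).2.1 j).trans (mul_le_mul_of_nonneg_right (hKle1 j)
      (pow_nonneg (sub_nonneg.2 hs.1.le) _)))
    (fun s hs j => ((hfacts s hs).2.2 j).trans (mul_le_mul_of_nonneg_right (hKle2 j)
      (pow_nonneg (sub_nonneg.2 hs.1.le) _)))
    d1 d2 hd1 hd2 (|L| * D) (by positivity) hfn t htT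
  have hfin := (hfacts t htT).1.2 _ _ (by positivity) hX i
  have hpi : 0 < (t - t0) ^ (i : ℕ) := pow_pos hδ _
  refine le_of_mul_le_mul_right (hfin.trans ?_) hpi
  have hpow : (t - t0) ^ n ≤ (t - t0) * (t - t0) ^ (i : ℕ) := by
    rw [← pow_succ']
    exact pow_le_pow_of_le_one hδ.le (by linarith [htT.2]) (by have := i.2; omega)
  have hQδ : Q * (t - t0) ≤ ℓ := by
    have h1 : t - t0 ≤ ℓ / (Q + 1) := by linarith [htT.2]
    rw [le_div_iff₀ (by positivity)] at h1
    nlinarith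
  calc B * (n * K ^ 3 * (|L| * D) * (t - t0) ^ n)
      = Q * D * (t - t0) ^ n := by simp only [Q]; ring
    _ ≤ Q * D * ((t - t0) * (t - t0) ^ (i : ℕ)) :=
        mul_le_mul_of_nonneg_left hpow (by positivity)
    _ = (Q * (t - t0)) * D * (t - t0) ^ (i : ℕ) := by ring
    _ ≤ ℓ * D * (t - t0) ^ (i : ℕ) := by gcongr
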